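/- Elliptic binomial theorem: for every integer k ≥ 0, all α, β, γ ∈ ℂ such that every bracket appearing in a denominator of C_n^k(α,β,γ) (n = 0,…,k) is nonzero, and every z ∈ ℂ, one has [α+rz]_k [α−rz]_k = Σ_{n=0}^{k} C_n^k(α,β,γ) · [β+rz]_n [β−rz]_n [γ+rz]_{k−n} [γ−rz]_{k−n}. -/

import Mathlib

noncomputable section

open Complex Finset

namespace Ell

/-- `x^s = exp(-iπ s /(r τ))`. -/
def xp (τ : ℂ) (r : ℝ) (s : ℂ) : ℂ :=
  Complex.exp (-Complex.I * (Real.pi : ℂ) * s / ((r : ℂ) * τ))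

/-- `Θ_p(z) = ∏_{j ≥ 0} (1 - z p^j)(1 - p^{j+1}/z)(1 - p^{j+1})`. -/
def Theta (p z : ℂ) : ℂ :=
  ∏' j : ℕ, ((1 - z * p ^ j) * (1 - p ^ (j + 1) / z) * (1 - p ^ (j + 1)))

/-- The bracket `[u] = x^{u²/r - u} Θ_p(x^{2u})` with `p = x^{2r}`. -/
def br (τ : ℂ) (r : ℝ) (u : ℂ) : ℂ :=
  xp τ r (u ^ 2 / (r : ℂ) - u) * Theta (xp τ r (2 * (r : ℂ))) (xp τ r (2 * u))

/-- Elliptic shifted factorial `[u]_n = ∏_{j=0}^{n-1} [u+j]`. -/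
def brF (τ : ℂ) (r : ℝ) (u : ℂ) (n : ℕ) : ℂ :=
  ∏ j ∈ Finset.range n, br τ r (u + (j : ℂ))

/-- Elliptic binomial coefficient `C_n^k(α,β,γ)`. -/
def Cnk (τ : ℂ) (r : ℝ) (k n : ℕ) (α β γ : ℂ) : ℂ :=
  brF τ r 1 k / (brF τ r 1 n * brF τ r 1 (k - n)) *
    (brF τ r (α - γ) n * brF τ r (α + γ + (k : ℂ) - (n : ℂ)) n *
      brF τ r (α - β) (k - n) * brF τ r (α + β + (n : ℂ)) (k - n)) /
    (brF τ r (β - γ + (n : ℂ) - (k : ℂ)) n * brF τ r (γ - β - (n : ℂ)) (k - n) *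
      brF τ r (β + γ) k)

/-- The elliptic 6j-symbol `R_n^m(α,β,γ,δ;k)`. -/
def Rnm (τ : ℂ) (r : ℝ) (k n m : ℕ) (α β γ δ : ℂ) : ℂ :=
  ∑ j ∈ Finset.range (min n m + 1),
    Cnk τ r n j α γ (β + (k : ℂ) - (n : ℂ)) * Cnk τ r (k - j) (m - j) β (γ + (j : ℂ)) δ

/-- Terminating very-well-poised elliptic hypergeometric sum with explicit
truncation `N`:  `Σ_{j=0}^N ([u₀+2j]/[u₀]) ([u₀]_j/[1]_j) ∏ᵢ [uᵢ]_j/[u₀+1-uᵢ]_j`. -/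
def Vsum (τ : ℂ) (r : ℝ) (u₀ : ℂ) (us : List ℂ) (N : ℕ) : ℂ :=
  ∑ j ∈ Finset.range (N + 1),
    br τ r (u₀ + 2 * (j : ℂ)) / br τ r u₀ * (brF τ r u₀ j / brF τ r 1 j) *
      (us.map fun ui => brF τ r ui j / brF τ r (u₀ + 1 - ui) j).prod

/-- "Every bracket appearing in a denominator of `C_n^k(·,β,γ)` is nonzero". -/
def CdenomNZ (τ : ℂ) (r : ℝ) (k n : ℕ) (β γ : ℂ) : Prop :=
  brF τ r 1 n ≠ 0 ∧ brF τ r 1 (k - n) ≠ 0 ∧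
    brF τ r (β - γ + (n : ℂ) - (k : ℂ)) n ≠ 0 ∧
    brF τ r (γ - β - (n : ℂ)) (k - n) ≠ 0 ∧ brF τ r (β + γ) k ≠ 0

/-- "Every bracket appearing in a denominator of `R_n^m(α,β,γ,δ;k)` is nonzero". -/
def RdenomNZ (τ : ℂ) (r : ℝ) (k n m : ℕ) (β γ δ : ℂ) : Prop :=
  ∀ j ≤ min n m,
    CdenomNZ τ r n j γ (β + (k : ℂ) - (n : ℂ)) ∧
      CdenomNZ τ r (k - j) (m - j) (γ + (j : ℂ)) δ

/-- Jacobi theta `ϑ₁(v|σ)`. -/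
def th1 (v σ : ℂ) : ℂ :=
  2 * Complex.exp (2 * (Real.pi : ℂ) * Complex.I * σ / 8) *
    (∏' n : ℕ, (1 - Complex.exp (2 * (Real.pi : ℂ) * Complex.I * σ) ^ (n + 1))) *
    Complex.sin ((Real.pi : ℂ) * v) *
    ∏' n : ℕ,
      (1 - 2 * Complex.exp (2 * (Real.pi : ℂ) * Complex.I * σ) ^ (n + 1) *
            Complex.cos (2 * (Real.pi : ℂ) * v) +
        Complex.exp (2 * (Real.pi : ℂ) * Complex.I * σ) ^ (2 * (n + 1)))

/-- Jacobi theta `ϑ₀(v|σ)`. -/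
def th0 (v σ : ℂ) : ℂ :=
  -Complex.I * Complex.exp ((Real.pi : ℂ) * Complex.I * (v + σ / 4)) * th1 (v + σ / 2) σ

/-- Jacobi theta `ϑ₂(v|σ)`. -/
def th2 (v σ : ℂ) : ℂ := th1 (v + 1 / 2) σ

/-- Jacobi theta `ϑ₃(v|σ)`. -/
def th3 (v σ : ℂ) : ℂ :=
  Complex.exp ((Real.pi : ℂ) * Complex.I * (v + σ / 4)) * th1 (v + (σ + 1) / 2) σ

/-- Intertwining vector component `ψ_ε(u)^a_b`, `ε ∈ {1, -1}`. -/
def psi (τ : ℂ) (r : ℝ) (u : ℂ) (ε : ℤ) (a b : ℤ) : ℂ :=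
  if ε = 1 then th0 ((((a : ℂ) - (b : ℂ)) * u + (a : ℂ)) / (2 * (r : ℂ))) (τ / 2)
  else th3 ((((a : ℂ) - (b : ℂ)) * u + (a : ℂ)) / (2 * (r : ℂ))) (τ / 2)

/-- The constant `C = x^{-r/4} e^{-iπ/4} τ^{1/2}`. -/
def Cc (τ : ℂ) (r : ℝ) : ℂ :=
  xp τ r (-(r : ℂ) / 4) * Complex.exp (-(Real.pi : ℂ) * Complex.I / 4) * τ ^ (1 / 2 : ℂ)

/-- Dual intertwining vector component `ψ*_ε(u)^a_b = -ε(a-b) C² ψ_{-ε}(u-1)^a_b/(2[b][u])`. -/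
def psiStar (τ : ℂ) (r : ℝ) (u : ℂ) (ε : ℤ) (a b : ℤ) : ℂ :=
  -(ε : ℂ) * ((a : ℂ) - (b : ℂ)) * Cc τ r ^ 2 * psi τ r (u - 1) (-ε) a b /
    (2 * br τ r (b : ℂ) * br τ r u)

/-- Sign attached to a boolean. -/
def sg (b : Bool) : ℤ := if b then 1 else -1

/-- Canonical path from `a`: up for `j ≤ n`, down afterwards. -/
def cpathZ (a n : ℤ) (j : ℕ) : ℤ := if (j : ℤ) ≤ n then a + j else a + 2 * n - j

/-- Admissibility: `a - b ∈ {-k, -k+2, …, k}`. -/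
def adm (k : ℕ) (a b : ℤ) : Prop := (a - b).natAbs ≤ k ∧ (a - b - (k : ℤ)) % 2 = 0

instance (k : ℕ) (a b : ℤ) : Decidable (adm k a b) := by unfold adm; infer_instance

/-- Fused intertwining vector component `ψ^{(k)}_μ(u)^a_b` (zero if `a,b` not admissible). -/
def psiF (τ : ℂ) (r : ℝ) (k : ℕ) (μ : ℤ) (u : ℂ) (a b : ℤ) : ℂ :=
  if adm k a b then
    ∑ ε ∈ Finset.univ.filter fun ε : Fin k → Bool => (∑ j, sg (ε j)) = μ,
      ∏ j : Fin k,
        psi τ r (u + (k : ℂ) - (((j : ℕ) + 1 : ℕ) : ℂ)) (sg (ε j))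
          (cpathZ a (((k : ℤ) - (a - b)) / 2) (j : ℕ))
          (cpathZ a (((k : ℤ) - (a - b)) / 2) ((j : ℕ) + 1))
  else 0

/-- Partial-sum path attached to a sign sequence `δ`, starting at `a`. -/
def spath (k : ℕ) (a : ℤ) (δ : Fin k → Bool) (j : ℕ) : ℤ :=
  a + ∑ i ∈ Finset.range j, if h : i < k then sg (δ ⟨i, h⟩) else 0

/-- Fused dual intertwining vector component `ψ*^{(k)}_μ(u)^b_a`
(sum over all admissible paths from `a` to `b`; zero if not admissible). -/
def psiStarF (τ : ℂ) (r : ℝ) (k : ℕ) (μ : ℤ) (u : ℂ) (b a : ℤ) : ℂ :=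
  if adm k a b then
    ∑ δ ∈ Finset.univ.filter fun δ : Fin k → Bool => (∑ j, sg (δ j)) = b - a,
      ∏ j : Fin k,
        psiStar τ r (u + (k : ℂ) - (((j : ℕ) + 1 : ℕ) : ℂ))
          (if ((j : ℕ) + 1 : ℤ) ≤ ((k : ℤ) + μ) / 2 then 1 else -1)
          (spath k a δ ((j : ℕ) + 1)) (spath k a δ (j : ℕ))
  else 0

/-- The `L`-matrix `L^{(k)}(a,b;c,d|u) = Σ_μ ψ*^{(k)}_μ(u)^d_c ψ^{(k)}_μ(u)^a_b`. -/
def Lk (τ : ℂ) (r : ℝ) (k : ℕ) (u : ℂ) (a b c d : ℤ) : ℂ :=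
  ∑ i ∈ Finset.range (k + 1),
    psiStarF τ r k ((k : ℤ) - 2 * (i : ℤ)) u d c * psiF τ r k ((k : ℤ) - 2 * (i : ℤ)) u a b

/-- Normalized face weight `W̄(a,b;d,c|u)` (arguments ordered (NW, NE; SW, SE)). -/
def Wb (τ : ℂ) (r : ℝ) (u : ℂ) (a b d c : ℤ) : ℂ :=
  if b = a + 1 ∧ d = a + 1 ∧ c = a + 2 then 1
  else if b = a - 1 ∧ d = a - 1 ∧ c = a - 2 then 1
  else if b = a + 1 ∧ d = a + 1 ∧ c = a then
    br τ r ((a : ℂ) - u) * br τ r 1 / (br τ r (a : ℂ) * br τ r (1 + u))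
  else if b = a - 1 ∧ d = a - 1 ∧ c = a then
    br τ r ((a : ℂ) + u) * br τ r 1 / (br τ r (a : ℂ) * br τ r (1 + u))
  else if b = a + 1 ∧ d = a - 1 ∧ c = a then
    br τ r ((a : ℂ) + 1) * br τ r u / (br τ r (a : ℂ) * br τ r (1 + u))
  else if b = a - 1 ∧ d = a + 1 ∧ c = a then
    br τ r ((a : ℂ) - 1) * br τ r u / (br τ r (a : ℂ) * br τ r (1 + u))
  else 0

/-- Sequence with prescribed endpoints `d`, `c` and free interior values `f`. -/
def seqI (k : ℕ) (d c : ℤ) (f : Fin (k - 1) → ℤ) (j : ℕ) : ℤ :=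
  if h0 : j = 0 then d
  else if hj : j < k then f ⟨j - 1, by omega⟩ else c

/-- Fused face weight `W^{(k,1)}(a,b;d,c|u)`. -/
def Wk1 (τ : ℂ) (r : ℝ) (k : ℕ) (u : ℂ) (a b d c : ℤ) : ℂ :=
  if adm k a b then
    ∑' f : Fin (k - 1) → ℤ,
      ∏ j ∈ Finset.range k,
        Wb τ r (u + (k : ℂ) - ((j : ℂ) + 1))
          (cpathZ a (((k : ℤ) - (a - b)) / 2) j)
          (cpathZ a (((k : ℤ) - (a - b)) / 2) (j + 1))
          (seqI k d c f j) (seqI k d c f (j + 1))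
  else 0

/-- Fused face weight `W^{(k,l)}(a,b;d,c|u)`. -/
def Wkl (τ : ℂ) (r : ℝ) (k l : ℕ) (u : ℂ) (a b d c : ℤ) : ℂ :=
  if adm l b c then
    ∑' g : Fin (l - 1) → ℤ,
      ∏ i ∈ Finset.range l,
        Wk1 τ r k (u - (l : ℂ) + ((i : ℂ) + 1))
          (seqI l a d g i) (cpathZ b (((l : ℤ) - (b - c)) / 2) i)
          (seqI l a d g (i + 1)) (cpathZ b (((l : ℤ) - (b - c)) / 2) (i + 1))
  else 0

/-- Eight-vertex weight `ā(u)`. -/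
def aw (τ : ℂ) (r : ℝ) (u : ℂ) : ℂ :=
  th2 (1 / (2 * (r : ℂ))) (τ / 2) * th2 (u / (2 * (r : ℂ))) (τ / 2) /
    (th2 0 (τ / 2) * th2 ((1 + u) / (2 * (r : ℂ))) (τ / 2))

/-- Eight-vertex weight `b̄(u)`. -/
def bw (τ : ℂ) (r : ℝ) (u : ℂ) : ℂ :=
  th2 (1 / (2 * (r : ℂ))) (τ / 2) * th1 (u / (2 * (r : ℂ))) (τ / 2) /
    (th2 0 (τ / 2) * th1 ((1 + u) / (2 * (r : ℂ))) (τ / 2))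

/-- Eight-vertex weight `c̄(u)`. -/
def cw (τ : ℂ) (r : ℝ) (u : ℂ) : ℂ :=
  th1 (1 / (2 * (r : ℂ))) (τ / 2) * th2 (u / (2 * (r : ℂ))) (τ / 2) /
    (th2 0 (τ / 2) * th1 ((1 + u) / (2 * (r : ℂ))) (τ / 2))

/-- Eight-vertex weight `d̄(u)`. -/
def dw (τ : ℂ) (r : ℝ) (u : ℂ) : ℂ :=
  -(th1 (1 / (2 * (r : ℂ))) (τ / 2) * th1 (u / (2 * (r : ℂ))) (τ / 2)) /
    (th2 0 (τ / 2) * th2 ((1 + u) / (2 * (r : ℂ))) (τ / 2))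

/-- The normalized eight-vertex `R`-matrix entry `R̄(u)_{(ε₁,ε₂),(ε₁',ε₂')}`. -/
def Rbar (τ : ℂ) (r : ℝ) (u : ℂ) (e1 e2 e1' e2' : ℤ) : ℂ :=
  if e1' = e1 ∧ e2' = e2 ∧ e1 = e2 then aw τ r u
  else if e1' = e1 ∧ e2' = e2 ∧ e1 = -e2 then bw τ r u
  else if e1' = e2 ∧ e2' = e1 ∧ e1 = -e2 then cw τ r u
  else if e1' = -e1 ∧ e2' = -e2 ∧ e1 = e2 then dw τ r u
  else 0

/-- Sklyanin standard-basis vector `v_+(z)`. -/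
def vp (τ z : ℂ) : ℂ := th3 (2 * z) (2 * τ) - th2 (2 * z) (2 * τ)

/-- Sklyanin standard-basis vector `v_-(z)`. -/
def vm (τ z : ℂ) : ℂ := th3 (2 * z) (2 * τ) + th2 (2 * z) (2 * τ)

/-!
A function `H` with Weierstrass' three-term identity lets one write `H (a + z) * H (a - z)` as a
linear combination of the same expression at two nodes `b` and `c`. Multiplying the expansion for
`k` by the next factor `[α + k + z] [α + k - z]` and interpolating it at the nodes `β + n` and
`γ + k - n` turns each term into two terms of the expansion for `k + 1`, and the resulting Pascal
rule for the coefficients is again an instance of the three-term identity.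

The bracket satisfies this identity because, by the Jacobi triple product, it is a theta function.
Splitting the double series for `[a + b] [a - b]` according to the parity of the sum of the indices
writes it as `f a * g b - g a * f b`, and the three-term identity is the Plücker relation between
such determinants.
-/

section ShiftedFactorial

variable {K M : Type*} [AddCommMonoidWithOne K]

/-- The shifted factorial `[u]_n = [u] [u + 1] ⋯ [u + n - 1]` attached to an arbitrary bracket
`[u] = H u`, so that `brF τ r` is the case `H = br τ r`. -/
def shiftedFactorial [CommMonoid M] (H : K → M) (u : K) (n : ℕ) : M :=
  ∏ j ∈ range n, H (u + j)

@[simp]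
lemma shiftedFactorial_zero [CommMonoid M] (H : K → M) (u : K) : shiftedFactorial H u 0 = 1 :=
  prod_range_zero _

lemma shiftedFactorial_succ [CommMonoid M] (H : K → M) (u : K) (n : ℕ) :
    shiftedFactorial H u (n + 1) = shiftedFactorial H u n * H (u + n) :=
  prod_range_succ _ n

lemma shiftedFactorial_succ' [CommMonoid M] (H : K → M) (u : K) (n : ℕ) :
    shiftedFactorial H u (n + 1) = H u * shiftedFactorial H (u + 1) n := by
  simp only [shiftedFactorial, prod_range_succ', Nat.cast_zero, add_zero, Nat.cast_succ,
    mul_comm (H u), add_assoc, add_comm (1 : K)]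

lemma shiftedFactorial_ne_zero_iff [CommMonoidWithZero M] [NoZeroDivisors M] [Nontrivial M]
    {H : K → M} {u : K} {n : ℕ} : shiftedFactorial H u n ≠ 0 ↔ ∀ j < n, H (u + j) ≠ 0 := by
  simp [shiftedFactorial, prod_ne_zero_iff]

end ShiftedFactorial

section ThreeTerm

variable {K F : Type*}

/-- Weierstrass' three-term identity for a function `H`, the addition formula that is
characteristic of the sigma function and of its trigonometric and rational degenerations. -/
def IsThreeTerm [AddGroup K] [CommRing F] (H : K → F) : Prop :=
  ∀ x y z w : K,
    H (x + z) * H (x - z) * (H (y + w) * H (y - w)) -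
        H (x + w) * H (x - w) * (H (y + z) * H (y - z)) =
      H (x + y) * H (x - y) * (H (z + w) * H (z - w))

lemma IsThreeTerm.of_mul_eq_sub [AddGroup K] [CommRing F] {H : K → F} (f g : K → F)
    (h : ∀ a b, H (a + b) * H (a - b) = f a * g b - g a * f b) : IsThreeTerm H := by
  intro x y z w
  simp only [h]
  ring

/-- The coefficient of `[b + z] [b - z]` when `[a + z] [a - z]` is written as a linear combination
of `[b + z] [b - z]` and `[c + z] [c - z]`. -/
def interpCoeff [AddGroup K] [Field F] (H : K → F) (a b c : K) : F :=
  H (a - c) * H (a + c) / (H (b - c) * H (b + c))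

namespace IsThreeTerm

variable [Field K] [Field F] [NeZero (2 : K)] {H : K → F}

-- Exchanging `z` and `w` in the identity changes the sign of the left-hand side.
lemma odd (hH : IsThreeTerm H) : Function.Odd H := by
  intro u
  by_cases hzero : ∀ a, H a = 0
  · simp [hzero]
  obtain ⟨a, ha⟩ := not_forall.mp hzero
  have hz : (a + u) / 2 + (a - u) / 2 = a := by field
  have hw : (a - u) / 2 + (a + u) / 2 = a := by field
  have hsub : (a + u) / 2 - (a - u) / 2 = u := by field
  have hsub' : (a - u) / 2 - (a + u) / 2 = -u := by field
  have h := hH a 0 ((a + u) / 2) ((a - u) / 2)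
  have h' := hH a 0 ((a - u) / 2) ((a + u) / 2)
  simp only [hz, hw, hsub, hsub', add_zero, sub_zero] at h h'
  have hsum : H a * H a * H a * (H (-u) + H u) = 0 := by linear_combination -h - h'
  have hcube : H a * H a * H a ≠ 0 := mul_ne_zero (mul_ne_zero ha ha) ha
  exact eq_neg_of_add_eq_zero_left ((mul_eq_zero.mp hsum).resolve_left hcube)

lemma apply_sub_comm (hH : IsThreeTerm H) (a b : K) : H (a - b) = -H (b - a) := by
  rw [← neg_sub, hH.odd]

lemma apply_add_intCast_ne_zero (hH : IsThreeTerm H) {u : K} {k : ℕ}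
    (hpos : shiftedFactorial H u k ≠ 0) (hneg : shiftedFactorial H (-u) k ≠ 0) {j : ℤ}
    (hj : |j| < k) : H (u + j) ≠ 0 := by
  rw [shiftedFactorial_ne_zero_iff] at hpos hneg
  obtain ⟨n, rfl | rfl⟩ := j.eq_nat_or_neg
  · exact_mod_cast hpos n (by simpa using hj)
  · have h := hneg n (by simpa using hj)
    rw [← neg_ne_zero, ← hH.odd] at h
    simpa [sub_eq_add_neg, add_comm] using h

lemma mul_eq_interpCoeff_add (hH : IsThreeTerm H) (a z : K) {b c : K} (hsub : H (b - c) ≠ 0)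
    (hadd : H (b + c) ≠ 0) :
    H (a + z) * H (a - z) =
      interpCoeff H a b c * (H (b + z) * H (b - z)) +
        interpCoeff H a c b * (H (c + z) * H (c - z)) := by
  have h := hH a b z c
  rw [add_comm z c, hH.apply_sub_comm z c] at h
  rw [interpCoeff, interpCoeff, add_comm c b, hH.apply_sub_comm c b]
  field_simp
  linear_combination h

lemma pascal_identity (hH : IsThreeTerm H) (p q M L : K) :
    H (M + L) * H (q - p) * H (p + M) * H (q + L) =
      H (p + M + L) * H q * H M * H (q - p + L) +
        H (q + M + L) * H p * H L * H (q - p - M) := by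
  have h := hH ((p + 2 * M + L) / 2) ((2 * q - p + L) / 2) ((p + L) / 2) ((p - L) / 2)
  rw [show (p + 2 * M + L) / 2 + (p + L) / 2 = p + M + L by field,
    show (p + 2 * M + L) / 2 - (p + L) / 2 = M by field,
    show (2 * q - p + L) / 2 + (p - L) / 2 = q by field,
    show (2 * q - p + L) / 2 - (p - L) / 2 = q - p + L by field,
    show (p + 2 * M + L) / 2 + (p - L) / 2 = p + M by field,
    show (p + 2 * M + L) / 2 - (p - L) / 2 = M + L by field,
    show (2 * q - p + L) / 2 + (p + L) / 2 = q + L by field,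
    show (2 * q - p + L) / 2 - (p + L) / 2 = q - p by field,
    show (p + 2 * M + L) / 2 + (2 * q - p + L) / 2 = q + M + L by field,
    show (p + 2 * M + L) / 2 - (2 * q - p + L) / 2 = M - (q - p) by field,
    show (p + L) / 2 + (p - L) / 2 = p by field,
    show (p + L) / 2 - (p - L) / 2 = L by field,
    hH.apply_sub_comm M (q - p)] at h
  linear_combination -h

end IsThreeTerm

end ThreeTerm

section BinomialCoeff

variable {K F : Type*} [Field K] [Field F]

/-- The coefficient `C_n^{n + l}(α, β, γ)` for an arbitrary bracket `H`. Indexing by `n` and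
`l = k - n` makes the symmetry under `(β, n) ↔ (γ, l)` visible and avoids subtraction. -/
def binomialCoeff (H : K → F) (α β γ : K) (n l : ℕ) : F :=
  shiftedFactorial H 1 (n + l) / (shiftedFactorial H 1 n * shiftedFactorial H 1 l) *
    (shiftedFactorial H (α - γ) n * shiftedFactorial H (α + γ + l) n *
      shiftedFactorial H (α - β) l * shiftedFactorial H (α + β + n) l) /
    (shiftedFactorial H (β - γ - l) n * shiftedFactorial H (γ - β - n) l *
      shiftedFactorial H (β + γ) (n + l))

lemma binomialCoeff_swap (H : K → F) (α β γ : K) (n l : ℕ) :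
    binomialCoeff H α β γ n l = binomialCoeff H α γ β l n := by
  simp only [binomialCoeff, add_comm n l, add_comm β γ]
  ring

lemma binomialCoeff_zero_succ {H : K → F} (α β γ : K) {l : ℕ}
    (hone : shiftedFactorial H 1 (l + 1) ≠ 0) :
    binomialCoeff H α β γ 0 (l + 1) =
      binomialCoeff H α β γ 0 l * interpCoeff H (α + l) (γ + l) β := by
  have hl : shiftedFactorial H 1 l ≠ 0 := by
    rw [shiftedFactorial_succ] at hone
    exact left_ne_zero_of_mul hone
  have hcoeff (i : ℕ) (hi : shiftedFactorial H 1 i ≠ 0) : binomialCoeff H α β γ 0 i =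
      shiftedFactorial H (α - β) i * shiftedFactorial H (α + β) i /
        (shiftedFactorial H (γ - β) i * shiftedFactorial H (β + γ) i) := by
    simp [binomialCoeff, div_self hi]
  rw [hcoeff _ hone, hcoeff _ hl, interpCoeff]
  simp only [shiftedFactorial_succ, add_right_comm, add_sub_right_comm, add_comm β γ]
  ring

lemma binomialCoeff_succ_zero {H : K → F} (α β γ : K) {n : ℕ}
    (hone : shiftedFactorial H 1 (n + 1) ≠ 0) :
    binomialCoeff H α β γ (n + 1) 0 =
      binomialCoeff H α β γ n 0 * interpCoeff H (α + n) (β + n) γ := by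
  rw [binomialCoeff_swap, binomialCoeff_zero_succ α γ β hone, binomialCoeff_swap]

/-- The common factor of the three terms of the Pascal rule for `binomialCoeff`. -/
def pascalFactor (H : K → F) (α β γ : K) (m l : ℕ) : F :=
  shiftedFactorial H 1 (m + l + 1) / (shiftedFactorial H 1 m * shiftedFactorial H 1 l) *
    (shiftedFactorial H (α - γ) (m + 1) * shiftedFactorial H (α + γ + l + 1) m *
      shiftedFactorial H (α - β) (l + 1) * shiftedFactorial H (α + β + m + 1) l) /
    (shiftedFactorial H (β - γ - l) m * shiftedFactorial H (γ - β - m) l *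
      shiftedFactorial H (β + γ) (m + l + 1) * H (β + γ + (m + l + 1)))

lemma pascalFactor_swap (H : K → F) (α β γ : K) (m l : ℕ) :
    pascalFactor H α β γ m l = pascalFactor H α γ β l m := by
  simp only [pascalFactor, add_comm m l, add_comm β γ, add_comm (m : K) l]
  ring

lemma binomialCoeff_succ_succ_eq_pascalFactor_mul (H : K → F) (α β γ : K) (m l : ℕ) :
    binomialCoeff H α β γ (m + 1) (l + 1) =
      pascalFactor H α β γ m l *
        (H (m + 1 + (l + 1)) * H (α + γ + l + (m + 1)) * H (α + β + m + (l + 1)) /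
          (H (m + 1) * H (l + 1) * H (β - γ - (l + 1)) * H (γ - β - (m + 1)))) := by
  have hβγ : shiftedFactorial H (β - γ - (l + 1)) (m + 1) =
      H (β - γ - (l + 1)) * shiftedFactorial H (β - γ - l) m := by
    rw [shiftedFactorial_succ', sub_add_eq_sub_sub, sub_add_cancel]
  have hγβ : shiftedFactorial H (γ - β - (m + 1)) (l + 1) =
      H (γ - β - (m + 1)) * shiftedFactorial H (γ - β - m) l := by
    rw [shiftedFactorial_succ', sub_add_eq_sub_sub, sub_add_cancel]
  have hone (n : ℕ) : shiftedFactorial H 1 (n + 1) = shiftedFactorial H 1 n * H (n + 1) := by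
    rw [shiftedFactorial_succ, add_comm (1 : K)]
  have hαγ : shiftedFactorial H (α + γ + (l + 1)) (m + 1) =
      shiftedFactorial H (α + γ + l + 1) m * H (α + γ + l + (m + 1)) := by
    rw [shiftedFactorial_succ, ← add_assoc, add_assoc _ 1, add_comm 1 (m : K)]
  have hαβ : shiftedFactorial H (α + β + (m + 1)) (l + 1) =
      shiftedFactorial H (α + β + m + 1) l * H (α + β + m + (l + 1)) := by
    rw [shiftedFactorial_succ, ← add_assoc, add_assoc _ 1, add_comm 1 (l : K)]
  rw [binomialCoeff, pascalFactor, show m + 1 + (l + 1) = m + l + 1 + 1 by ring,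
    hone (m + l + 1), hone m, hone l, shiftedFactorial_succ H (β + γ)]
  push_cast
  rw [hβγ, hγβ, hαγ, hαβ, show (m : K) + l + 1 + 1 = m + 1 + (l + 1) by ring]
  ring

lemma binomialCoeff_mul_interpCoeff_eq_pascalFactor_mul (H : K → F) (α β γ : K) (m l : ℕ) :
    binomialCoeff H α β γ m (l + 1) *
        interpCoeff H (α + (m + (l + 1))) (β + m) (γ + (l + 1)) =
      pascalFactor H α β γ m l *
        (H (α + γ + l + (m + 1) + (l + 1)) * H (α + β + m) /
          (H (l + 1) * H (β - γ - (l + 1)) * H (γ - β + l - m))) := by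
  have hβγ : (shiftedFactorial H (β - γ - (l + 1)) m)⁻¹ * (H (β + m - (γ + (l + 1))))⁻¹ =
      (H (β - γ - (l + 1)))⁻¹ * (shiftedFactorial H (β - γ - l) m)⁻¹ := by
    rw [show β + m - (γ + (l + 1)) = β - γ - (l + 1) + m by ring, ← mul_inv, ← mul_inv,
      ← shiftedFactorial_succ, shiftedFactorial_succ', sub_add_eq_sub_sub, sub_add_cancel]
  have hinterp : interpCoeff H (α + (m + (l + 1))) (β + m) (γ + (l + 1)) =
      H (α - γ + m) * H (α + γ + l + (m + 1) + (l + 1)) /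
        (H (β + m - (γ + (l + 1))) * H (β + γ + (m + l + 1))) := by
    rw [interpCoeff, show α + (m + (l + 1)) - (γ + (l + 1)) = α - γ + m by ring,
      show α + (m + (l + 1)) + (γ + (l + 1)) = α + γ + l + (m + 1) + (l + 1) by ring,
      show β + m + (γ + (l + 1)) = β + γ + (m + l + 1) by ring]
  rw [binomialCoeff, pascalFactor, hinterp, ← add_assoc m l 1, shiftedFactorial_succ H 1 l,
    shiftedFactorial_succ H (γ - β - m), shiftedFactorial_succ' H (α + β + m),
    shiftedFactorial_succ H (α - γ) m, add_comm 1 (l : K), sub_add_eq_add_sub]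
  push_cast
  rw [← add_assoc (α + γ)]
  linear_combination
    shiftedFactorial H 1 (m + l + 1) /
        (shiftedFactorial H 1 m * (shiftedFactorial H 1 l * H (l + 1))) *
      (shiftedFactorial H (α - γ) m * H (α - γ + m) * shiftedFactorial H (α + γ + l + 1) m *
        shiftedFactorial H (α - β) (l + 1) *
        (H (α + β + m) * shiftedFactorial H (α + β + m + 1) l) *
        H (α + γ + l + (m + 1) + (l + 1))) /
      (shiftedFactorial H (γ - β - m) l * H (γ - β + l - m) *
        shiftedFactorial H (β + γ) (m + l + 1) * H (β + γ + (m + l + 1))) * hβγ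

lemma binomialCoeff_mul_interpCoeff_eq_pascalFactor_mul' (H : K → F) (α β γ : K) (m l : ℕ) :
    binomialCoeff H α β γ (m + 1) l *
        interpCoeff H (α + (m + 1 + l)) (γ + l) (β + (m + 1)) =
      pascalFactor H α β γ m l *
        (H (α + β + m + (m + 1) + (l + 1)) * H (α + γ + l) /
          (H (m + 1) * H (γ - β - (m + 1)) * H (β - γ + m - l))) := by
  rw [binomialCoeff_swap, pascalFactor_swap, add_comm ((m : K) + 1),
    binomialCoeff_mul_interpCoeff_eq_pascalFactor_mul, add_right_comm _ ((l : K) + 1)]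

-- After division by `pascalFactor` this is `IsThreeTerm.pascal_identity` with `M = m + 1`,
-- `L = l + 1`, `p = α + γ + l` and `q = α + β + m`.
lemma binomialCoeff_succ_succ [NeZero (2 : K)] {H : K → F} (hH : IsThreeTerm H) (α : K) {β γ : K}
    {m l : ℕ} (hone : shiftedFactorial H 1 (m + l + 2) ≠ 0)
    (hβγ : shiftedFactorial H (β - γ) (m + l + 2) ≠ 0)
    (hγβ : shiftedFactorial H (γ - β) (m + l + 2) ≠ 0) :
    binomialCoeff H α β γ (m + 1) (l + 1) =
      binomialCoeff H α β γ m (l + 1) *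
          interpCoeff H (α + (m + (l + 1))) (β + m) (γ + (l + 1)) +
        binomialCoeff H α β γ (m + 1) l *
          interpCoeff H (α + (m + 1 + l)) (γ + l) (β + (m + 1)) := by
  have hsucc (n : ℕ) (hn : n < m + l + 2) : H (n + 1) ≠ 0 := by
    rw [add_comm]
    exact shiftedFactorial_ne_zero_iff.mp hone n hn
  have hshift (j : ℤ) (hj : |j| < m + l + 2) : H (β - γ + j) ≠ 0 :=
    hH.apply_add_intCast_ne_zero hβγ (by rwa [neg_sub]) (by exact_mod_cast hj)
  have hm := hsucc m (by lia)
  have hl := hsucc l (by lia)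
  have hδm : H (β - γ + m + 1) ≠ 0 := by simpa [add_assoc] using hshift (m + 1) (by grind)
  have hδl : H (β - γ - (l + 1)) ≠ 0 := by
    simpa [sub_eq_add_neg, add_assoc] using hshift (-(l + 1)) (by grind)
  have hδml : H (β - γ + m - l) ≠ 0 := by simpa [add_sub_assoc] using hshift (m - l) (by grind)
  have hodd : H (γ - β - (m + 1)) = -H (β - γ + m + 1) := by
    rw [← hH.odd]
    ring_nf
  have hodd' : H (γ - β + l - m) = -H (β - γ + m - l) := by
    rw [← hH.odd]
    ring_nf
  have hpascal := hH.pascal_identity (α + γ + l) (α + β + m) (m + 1) (l + 1)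
  rw [show α + β + m - (α + γ + l) = β - γ + m - l by ring,
    show β - γ + m - l + (l + 1) = β - γ + m + 1 by ring,
    show β - γ + m - l - (m + 1) = β - γ - (l + 1) by ring] at hpascal
  rw [binomialCoeff_succ_succ_eq_pascalFactor_mul,
    binomialCoeff_mul_interpCoeff_eq_pascalFactor_mul,
    binomialCoeff_mul_interpCoeff_eq_pascalFactor_mul', ← mul_add, hodd, hodd']
  congr 1
  field_simp
  linear_combination -hpascal

lemma sum_antidiagonal_succ_eq_sum_add {M : Type*} [AddCommMonoid M] (f g₁ g₂ : ℕ → ℕ → M) (k : ℕ)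
    (hleft : f 0 (k + 1) = g₂ 0 k) (hright : f (k + 1) 0 = g₁ k 0)
    (hmid : ∀ m l, m + l + 1 = k → f (m + 1) (l + 1) = g₁ m (l + 1) + g₂ (m + 1) l) :
    ∑ i ∈ antidiagonal (k + 1), f i.1 i.2 =
      ∑ i ∈ antidiagonal k, (g₁ i.1 i.2 + g₂ i.1 i.2) := by
  rw [sum_add_distrib]
  cases k with
  | zero => simp [Nat.antidiagonal_succ, hleft, hright, add_comm]
  | succ k =>
    have hinner : ∑ i ∈ antidiagonal k, f (i.1 + 1) (i.2 + 1) =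
        ∑ i ∈ antidiagonal k, g₁ i.1 (i.2 + 1) + ∑ i ∈ antidiagonal k, g₂ (i.1 + 1) i.2 := by
      rw [← sum_add_distrib]
      exact sum_congr rfl fun i hi => hmid i.1 i.2 (by rw [mem_antidiagonal.mp hi])
    rw [Nat.sum_antidiagonal_succ, Nat.sum_antidiagonal_succ', hinner, hleft, hright,
      Nat.sum_antidiagonal_succ', Nat.sum_antidiagonal_succ]
    dsimp only
    abel

/-- The function `[β + z]_n [β - z]_n [γ + z]_l [γ - z]_l` multiplying `binomialCoeff` in the
binomial theorem. -/
def binomialBasis (H : K → F) (β γ z : K) (n l : ℕ) : F :=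
  shiftedFactorial H (β + z) n * shiftedFactorial H (β - z) n *
    shiftedFactorial H (γ + z) l * shiftedFactorial H (γ - z) l

lemma mul_binomialBasis [NeZero (2 : K)] {H : K → F} (hH : IsThreeTerm H) (a z : K) {β γ : K}
    {n l : ℕ} (hsub : H (β + n - (γ + l)) ≠ 0) (hadd : H (β + n + (γ + l)) ≠ 0) :
    H (a + z) * H (a - z) * binomialBasis H β γ z n l =
      interpCoeff H a (β + n) (γ + l) * binomialBasis H β γ z (n + 1) l +
        interpCoeff H a (γ + l) (β + n) * binomialBasis H β γ z n (l + 1) := by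
  rw [hH.mul_eq_interpCoeff_add a z hsub hadd]
  simp only [binomialBasis, shiftedFactorial_succ, add_right_comm _ z, sub_add_eq_add_sub]
  ring

lemma shiftedFactorial_mul_eq_sum_antidiagonal [NeZero (2 : K)] {H : K → F} (hH : IsThreeTerm H)
    (α z : K) {β γ : K} {k : ℕ}
    (hone : shiftedFactorial H 1 k ≠ 0) (hβγ : shiftedFactorial H (β - γ) k ≠ 0)
    (hγβ : shiftedFactorial H (γ - β) k ≠ 0) (hadd : shiftedFactorial H (β + γ) k ≠ 0) :
    shiftedFactorial H (α + z) k * shiftedFactorial H (α - z) k =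
      ∑ i ∈ antidiagonal k,
        binomialCoeff H α β γ i.1 i.2 * binomialBasis H β γ z i.1 i.2 := by
  induction k with
  | zero => simp [binomialCoeff, binomialBasis]
  | succ k ih =>
    have hpred {u : K} (h : shiftedFactorial H u (k + 1) ≠ 0) : shiftedFactorial H u k ≠ 0 := by
      rw [shiftedFactorial_succ] at h
      exact left_ne_zero_of_mul h
    have hsub (n l : ℕ) (hk : n + l = k) : H (β + n - (γ + l)) ≠ 0 := by
      have h := hH.apply_add_intCast_ne_zero hβγ (by rwa [neg_sub]) (j := n - l) (by grind)
      rwa [Int.cast_sub, Int.cast_natCast, Int.cast_natCast, ← add_sub_add_comm] at h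
    have hsum (n l : ℕ) (hk : n + l = k) : H (β + n + (γ + l)) ≠ 0 := by
      rw [add_add_add_comm, ← Nat.cast_add, hk]
      exact shiftedFactorial_ne_zero_iff.mp hadd k k.lt_succ_self
    rw [shiftedFactorial_succ, shiftedFactorial_succ, mul_mul_mul_comm,
      ih (hpred hone) (hpred hβγ) (hpred hγβ) (hpred hadd), sum_mul,
      sum_antidiagonal_succ_eq_sum_add
        (fun n l => binomialCoeff H α β γ n l * binomialBasis H β γ z n l)
        (fun n l => binomialCoeff H α β γ n l * interpCoeff H (α + (n + l)) (β + n) (γ + l) *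
          binomialBasis H β γ z (n + 1) l)
        (fun n l => binomialCoeff H α β γ n l * interpCoeff H (α + (n + l)) (γ + l) (β + n) *
          binomialBasis H β γ z n (l + 1))]
    · refine sum_congr rfl fun i hi => ?_
      have hk : i.1 + i.2 = k := mem_antidiagonal.mp hi
      have h := mul_binomialBasis hH (α + k) z (hsub _ _ hk) (hsum _ _ hk)
      rw [add_right_comm α z, sub_add_eq_add_sub, ← Nat.cast_add, hk]
      linear_combination binomialCoeff H α β γ i.1 i.2 * h
    · simp only [binomialCoeff_zero_succ α β γ hone, Nat.cast_zero, zero_add, add_zero]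
    · simp only [binomialCoeff_succ_zero α β γ hone, Nat.cast_zero, add_zero]
    · rintro m l rfl
      simp only [binomialCoeff_succ_succ hH α hone hβγ hγβ, Nat.cast_succ, add_mul]

end BinomialCoeff

section FiniteTripleProduct

variable {𝕜 : Type*} [Field 𝕜]

/-- The `q`-factorial `(p; p)_N = (1 - p) (1 - p²) ⋯ (1 - p^N)`. -/
def qPochhammer (p : 𝕜) (N : ℕ) : 𝕜 := ∏ j ∈ range N, (1 - p ^ (j + 1))

/-- The reciprocal `1 / (p; p)_m`, extended by `0` to negative `m`, so that the finite form of the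
triple product becomes a sum over all of `ℤ`. -/
def qPochhammerInv (p : 𝕜) (m : ℤ) : 𝕜 := if m < 0 then 0 else (qPochhammer p m.toNat)⁻¹

/-- The `n`-th term `(-1)ⁿ p^{n(n-1)/2} zⁿ` of the theta series. -/
def thetaTerm (p z : 𝕜) (n : ℤ) : 𝕜 := (-1) ^ n * p ^ (n * (n - 1) / 2) * z ^ n

/-- The `n`-th term of the expansion of `∏_{j < N} (1 - z p^j) (1 - p^{j+1} / z)` in powers of
`z`. -/
def finiteThetaTerm (p z : 𝕜) (N : ℕ) (n : ℤ) : 𝕜 :=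
  qPochhammer p (2 * N) * qPochhammerInv p (N + n) * qPochhammerInv p (N - n) * thetaTerm p z n

variable {p z : 𝕜}

lemma qPochhammerInv_of_neg {m : ℤ} (hm : m < 0) : qPochhammerInv p m = 0 := if_pos hm

lemma qPochhammerInv_natCast (N : ℕ) : qPochhammerInv p N = (qPochhammer p N)⁻¹ := by
  simp [qPochhammerInv]

lemma qPochhammerInv_sub_one (hp : ∀ j : ℕ, p ^ (j + 1) ≠ 1) (m : ℤ) :
    qPochhammerInv p (m - 1) = (1 - p ^ m) * qPochhammerInv p m := by
  rcases lt_trichotomy m 0 with hneg | rfl | hpos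
  · rw [qPochhammerInv_of_neg hneg, qPochhammerInv_of_neg (by lia), mul_zero]
  · simp [qPochhammerInv_of_neg]
  · obtain ⟨j, rfl⟩ : ∃ j : ℕ, m = (j + 1 : ℕ) := ⟨(m - 1).toNat, by lia⟩
    have hj : 1 - p ^ (j + 1) ≠ 0 := sub_ne_zero.mpr (hp j).symm
    rw [Nat.cast_succ, add_sub_cancel_right, ← Nat.cast_succ, zpow_natCast,
      qPochhammerInv_natCast, qPochhammerInv_natCast, qPochhammer, qPochhammer, prod_range_succ,
      mul_inv, mul_left_comm, mul_inv_cancel₀ hj, mul_one]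

lemma thetaTerm_add_one (hp : p ≠ 0) (hz : z ≠ 0) (n : ℤ) :
    thetaTerm p z (n + 1) = -(p ^ n * z) * thetaTerm p z n := by
  have hexp : (n + 1) * (n + 1 - 1) / 2 = n * (n - 1) / 2 + n := by
    rw [show (n + 1) * (n + 1 - 1) = n * (n - 1) + n * 2 by ring,
      Int.add_mul_ediv_right _ _ two_ne_zero]
  rw [thetaTerm, thetaTerm, hexp, zpow_add₀ hp, zpow_add_one₀ hz,
    zpow_add_one₀ (neg_ne_zero.mpr one_ne_zero)]
  ring

lemma finiteThetaTerm_zero (n : ℤ) : finiteThetaTerm p z 0 n = if n = 0 then 1 else 0 := by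
  rcases lt_trichotomy n 0 with hneg | rfl | hpos
  · simp [finiteThetaTerm, qPochhammerInv_of_neg hneg, hneg.ne]
  · simp [finiteThetaTerm, thetaTerm, qPochhammerInv, qPochhammer]
  · simp [finiteThetaTerm, qPochhammerInv_of_neg (neg_lt_zero.mpr hpos), hpos.ne']

-- The coefficients are those of `(1 - z p^N) (1 - p^{N+1} / z)`.
lemma finiteThetaTerm_succ (hp : p ≠ 0) (hroot : ∀ j : ℕ, p ^ (j + 1) ≠ 1) (hz : z ≠ 0) (N : ℕ)
    (n : ℤ) :
    finiteThetaTerm p z (N + 1) n =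
      (1 + p ^ (2 * N + 1)) * finiteThetaTerm p z N n -
          z * p ^ N * finiteThetaTerm p z N (n - 1) -
        p ^ (N + 1) / z * finiteThetaTerm p z N (n + 1) := by
  have hpn : p ^ n ≠ 0 := zpow_ne_zero n hp
  have hpred (j : ℕ) (i : ℤ) :
      qPochhammerInv p (j + i - 1) = (1 - p ^ j * p ^ i) * qPochhammerInv p (j + i) := by
    rw [qPochhammerInv_sub_one hroot, zpow_add₀ hp, zpow_natCast]
  have hadd : qPochhammerInv p (N + n) =
      (1 - p ^ (N + 1) * p ^ n) * qPochhammerInv p ((N + 1 : ℕ) + n) := by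
    rw [← hpred]
    push_cast
    ring_nf
  have hsub : qPochhammerInv p (N - n) =
      (1 - p ^ (N + 1) * (p ^ n)⁻¹) * qPochhammerInv p ((N + 1 : ℕ) - n) := by
    rw [← zpow_neg, sub_eq_add_neg _ n, sub_eq_add_neg _ n, ← hpred]
    push_cast
    ring_nf
  have hadd' : qPochhammerInv p (N + (n - 1)) = (1 - p ^ N * p ^ n) * qPochhammerInv p (N + n) := by
    rw [← hpred, add_sub_assoc]
  have hsub' : qPochhammerInv p (N - (n + 1)) =
      (1 - p ^ N * (p ^ n)⁻¹) * qPochhammerInv p (N - n) := by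
    rw [← zpow_neg, sub_eq_add_neg _ n, ← hpred]
    ring_nf
  have hthetaTerm : thetaTerm p z n = -(p ^ n * p⁻¹ * z) * thetaTerm p z (n - 1) := by
    rw [← zpow_sub_one₀ hp, ← thetaTerm_add_one hp hz, sub_add_cancel]
  have hqPochhammer : qPochhammer p (2 * (N + 1)) =
      qPochhammer p (2 * N) * (1 - p ^ (2 * N + 1)) * (1 - p ^ (2 * N + 2)) := by
    rw [mul_add_one, qPochhammer, qPochhammer, prod_range_succ, prod_range_succ]
  rw [finiteThetaTerm, finiteThetaTerm, finiteThetaTerm, finiteThetaTerm, hadd', hsub',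
    show (N : ℤ) - (n - 1) = (N + 1 : ℕ) - n by push_cast; ring,
    show (N : ℤ) + (n + 1) = (N + 1 : ℕ) + n by push_cast; ring,
    hadd, hsub, hqPochhammer, thetaTerm_add_one hp hz, hthetaTerm]
  field_simp
  ring

lemma hasSum_finiteThetaTerm [TopologicalSpace 𝕜] [IsTopologicalRing 𝕜] (hp : p ≠ 0)
    (hroot : ∀ j : ℕ, p ^ (j + 1) ≠ 1) (hz : z ≠ 0) (N : ℕ) :
    HasSum (finiteThetaTerm p z N) (∏ j ∈ range N, ((1 - z * p ^ j) * (1 - p ^ (j + 1) / z))) := by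
  induction N with
  | zero =>
    rw [prod_range_zero, funext finiteThetaTerm_zero]
    exact hasSum_ite_eq 0 1
  | succ N ih =>
    have hpred := (Equiv.subRight (1 : ℤ)).hasSum_iff.mpr ih
    have hsucc := (Equiv.addRight (1 : ℤ)).hasSum_iff.mpr ih
    have hfactor : (1 - z * p ^ N) * (1 - p ^ (N + 1) / z) =
        1 + p ^ (2 * N + 1) - z * p ^ N - p ^ (N + 1) / z := by
      field_simp
      ring
    rw [funext (finiteThetaTerm_succ hp hroot hz N), prod_range_succ, hfactor,
      mul_comm (∏ j ∈ range N, _), sub_mul, sub_mul]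
    exact ((ih.mul_left _).sub (hpred.mul_left _)).sub (hsucc.mul_left _)

end FiniteTripleProduct

section TripleProductLimit

open Filter Topology

variable {𝕜 : Type*} [NormedField 𝕜] {p : 𝕜}

lemma pow_succ_ne_one_of_norm_lt_one (hp : ‖p‖ < 1) (j : ℕ) : p ^ (j + 1) ≠ 1 := fun h =>
  (pow_lt_one₀ (norm_nonneg p) hp j.succ_ne_zero).ne (by rw [← norm_pow, h, norm_one])

lemma summable_norm_mul_pow (hp : ‖p‖ < 1) (c : 𝕜) : Summable fun j : ℕ => ‖c * p ^ j‖ := by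
  simpa only [norm_mul, norm_pow] using
    (summable_geometric_of_lt_one (norm_nonneg p) hp).mul_left ‖c‖

lemma tendsto_qPochhammerInv {L : 𝕜} (hL : L ≠ 0) (hlim : Tendsto (qPochhammer p) atTop (𝓝 L)) :
    Tendsto (qPochhammerInv p) atTop (𝓝 L⁻¹) := by
  rw [← Nat.map_cast_int_atTop, tendsto_map'_iff]
  exact (hlim.inv₀ hL).congr fun N => (qPochhammerInv_natCast N).symm

lemma exists_norm_qPochhammerInv_le {L : 𝕜} (hL : L ≠ 0)
    (hlim : Tendsto (qPochhammer p) atTop (𝓝 L)) : ∃ C, ∀ m, ‖qPochhammerInv p m‖ ≤ C := by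
  obtain ⟨C, hC⟩ := (hlim.inv₀ hL).norm.bddAbove_range
  have hC' (N : ℕ) : ‖(qPochhammer p N)⁻¹‖ ≤ C := hC ⟨N, rfl⟩
  refine ⟨C, fun m => ?_⟩
  rcases lt_or_ge m 0 with hneg | hpos
  · rw [qPochhammerInv_of_neg hneg, norm_zero]
    exact (norm_nonneg _).trans (hC' 0)
  · lift m to ℕ using hpos
    rw [qPochhammerInv_natCast]
    exact hC' m

variable [CompleteSpace 𝕜]

lemma multipliable_one_sub_mul_pow (hp : ‖p‖ < 1) (c : 𝕜) :
    Multipliable fun j : ℕ => 1 - c * p ^ j := by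
  simpa only [neg_mul, ← sub_eq_add_neg] using
    multipliable_one_add_of_summable (summable_norm_mul_pow hp (-c))

lemma exists_tendsto_qPochhammer (hp : ‖p‖ < 1) :
    ∃ L ≠ 0, Tendsto (qPochhammer p) atTop (𝓝 L) := by
  have hfactor (j : ℕ) : 1 - p ^ (j + 1) = 1 + -p * p ^ j := by ring
  refine ⟨∏' j : ℕ, (1 - p ^ (j + 1)), ?_, ?_⟩
  · simp only [hfactor]
    refine tprod_one_add_ne_zero_of_summable (fun j => ?_) (summable_norm_mul_pow hp _)
    rw [← hfactor]
    exact sub_ne_zero.mpr (pow_succ_ne_one_of_norm_lt_one hp j).symm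
  · have h : Multipliable fun j : ℕ => 1 - p ^ (j + 1) := by
      simpa only [pow_succ'] using multipliable_one_sub_mul_pow hp p
    exact h.hasProd.tendsto_prod_nat

lemma tendsto_tsum_qPochhammer_mul (hp : ‖p‖ < 1) {t : ℤ → 𝕜} (ht : Summable (‖t ·‖)) :
    Tendsto (fun N : ℕ => ∑' n : ℤ, qPochhammer p N * (qPochhammer p (2 * N) *
        qPochhammerInv p (N + n) * qPochhammerInv p (N - n) * t n))
      atTop (𝓝 (∑' n, t n)) := by
  obtain ⟨L, hL, hlim⟩ := exists_tendsto_qPochhammer hp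
  have hinv := tendsto_qPochhammerInv hL hlim
  obtain ⟨C, hC⟩ := exists_norm_qPochhammerInv_le hL hlim
  obtain ⟨D, hD⟩ := hlim.norm.bddAbove_range
  replace hD (N : ℕ) : ‖qPochhammer p N‖ ≤ D := hD ⟨N, rfl⟩
  have hC_nonneg : 0 ≤ C := (norm_nonneg _).trans (hC 0)
  have hD_nonneg : 0 ≤ D := (norm_nonneg _).trans (hD 0)
  refine tendsto_tsum_of_dominated_convergence (bound := fun n => D * (D * C * C * ‖t n‖))
    ((ht.mul_left _).mul_left _) (fun n => ?_) (Eventually.of_forall fun N n => ?_)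
  · have hdouble : Tendsto (fun N : ℕ => qPochhammer p (2 * N)) atTop (𝓝 L) :=
      hlim.comp (tendsto_id.const_mul_atTop' two_pos)
    have hshift (i : ℤ) : Tendsto (fun N : ℕ => qPochhammerInv p (N + i)) atTop (𝓝 L⁻¹) :=
      hinv.comp (tendsto_atTop_add_const_right _ _ tendsto_natCast_atTop_atTop)
    have h := hlim.mul (((hdouble.mul (hshift n)).mul (hshift (-n))).mul_const (t n))
    simp only [← sub_eq_add_neg] at h
    rwa [mul_inv_cancel₀ hL, one_mul, mul_inv_cancel_left₀ hL] at h
  · simp only [norm_mul]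
    gcongr <;> apply_assumption

end TripleProductLimit

section TripleProduct

open Filter Topology

lemma tendsto_prod_Theta {p : ℂ} (hp : ‖p‖ < 1) (z : ℂ) :
    Tendsto (fun N => ∏ j ∈ range N, ((1 - z * p ^ j) * (1 - p ^ (j + 1) / z) * (1 - p ^ (j + 1))))
      atTop (𝓝 (Theta p z)) := by
  have h := ((multipliable_one_sub_mul_pow hp z).mul (multipliable_one_sub_mul_pow hp (p / z))).mul
    (multipliable_one_sub_mul_pow hp p)
  simp only [div_mul_eq_mul_div, ← pow_succ'] at h
  exact h.hasProd.tendsto_prod_nat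

lemma thetaTerm_exp (σ v : ℂ) (n : ℤ) :
    thetaTerm (cexp (2 * Real.pi * I * σ)) (cexp (2 * Real.pi * I * v)) n =
      jacobiTheta₂_term n (v + 1 / 2 - σ / 2) σ := by
  have hexp : ((n * (n - 1) / 2 : ℤ) : ℂ) = n * (n - 1) / 2 := by
    rw [Int.cast_div n.even_mul_pred_self.two_dvd (by norm_num)]
    push_cast
    rfl
  rw [thetaTerm, jacobiTheta₂_term, ← exp_pi_mul_I, ← exp_int_mul, ← exp_int_mul, ← exp_int_mul,
    hexp, ← Complex.exp_add, ← Complex.exp_add]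
  ring_nf

/-- The **Jacobi triple product identity**. -/
lemma Theta_exp_eq_jacobiTheta₂ {σ : ℂ} (hσ : 0 < σ.im) (v : ℂ) :
    Theta (cexp (2 * Real.pi * I * σ)) (cexp (2 * Real.pi * I * v)) =
      jacobiTheta₂ (v + 1 / 2 - σ / 2) σ := by
  set p := cexp (2 * Real.pi * I * σ)
  set z := cexp (2 * Real.pi * I * v)
  have hp : ‖p‖ < 1 := UpperHalfPlane.norm_exp_two_pi_I_lt_one ⟨σ, hσ⟩
  have hsum : Summable (thetaTerm p z) := by
    rw [funext (thetaTerm_exp σ v)]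
    exact (hasSum_jacobiTheta₂_term _ hσ).summable
  have hseries : ∑' n, thetaTerm p z n = jacobiTheta₂ (v + 1 / 2 - σ / 2) σ :=
    tsum_congr (thetaTerm_exp σ v)
  rw [← hseries]
  refine tendsto_nhds_unique (tendsto_prod_Theta hp z)
    ((tendsto_tsum_qPochhammer_mul hp hsum.norm).congr fun N => ?_)
  have hfinite := hasSum_finiteThetaTerm (exp_ne_zero _) (pow_succ_ne_one_of_norm_lt_one hp)
    (exp_ne_zero (2 * Real.pi * I * v)) N
  rw [prod_mul_distrib, ← hfinite.tsum_eq, tsum_mul_left, mul_comm]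
  rfl

end TripleProduct

section ThetaAddition

lemma hasSum_prod_int_of_parity {M : Type*} [AddCommMonoid M] [TopologicalSpace M]
    [ContinuousAdd M] {F : ℤ × ℤ → M} {s t : M}
    (heven : HasSum (fun q : ℤ × ℤ => F (q.1 + q.2, q.1 - q.2)) s)
    (hodd : HasSum (fun q : ℤ × ℤ => F (q.1 + q.2 + 1, q.1 - q.2)) t) : HasSum F (s + t) := by
  let e : ℤ × ℤ → ℤ × ℤ := fun q => (q.1 + q.2, q.1 - q.2)
  let o : ℤ × ℤ → ℤ × ℤ := fun q => (q.1 + q.2 + 1, q.1 - q.2)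
  have he : e.Injective := fun ⟨a, b⟩ ⟨c, d⟩ h => by
    simp only [e, Prod.mk.injEq] at h ⊢
    lia
  have ho : o.Injective := fun ⟨a, b⟩ ⟨c, d⟩ h => by
    simp only [o, Prod.mk.injEq] at h ⊢
    lia
  have hcompl : IsCompl (Set.range e) (Set.range o) := by
    constructor
    · rw [Set.disjoint_iff]
      rintro _ ⟨⟨⟨a, b⟩, rfl⟩, ⟨⟨c, d⟩, h⟩⟩
      simp only [e, o, Prod.mk.injEq] at h
      lia
    · rw [codisjoint_iff_le_sup]
      rintro ⟨m, n⟩ -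
      rcases Int.even_or_odd' (m + n) with ⟨a, h | h⟩
      · exact Or.inl ⟨(a, m - a), by simp only [e, Prod.mk.injEq]; lia⟩
      · exact Or.inr ⟨(a, m - a - 1), by simp only [o, Prod.mk.injEq]; lia⟩
  exact HasSum.add_isCompl hcompl (he.hasSum_range_iff.mpr heven) (ho.hasSum_range_iff.mpr hodd)

variable {σ : ℂ}

lemma hasSum_jacobiTheta₂_term_mul (hσ : 0 < σ.im) (x y : ℂ) :
    HasSum (fun q : ℤ × ℤ => jacobiTheta₂_term q.1 x σ * jacobiTheta₂_term q.2 y σ)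
      (jacobiTheta₂ x σ * jacobiTheta₂ y σ) := by
  have hx := (hasSum_jacobiTheta₂_term x hσ).summable.norm
  have hy := (hasSum_jacobiTheta₂_term y hσ).summable.norm
  rw [jacobiTheta₂, jacobiTheta₂, tsum_mul_tsum_of_summable_norm hx hy]
  exact (summable_mul_of_summable_norm hx hy).hasSum

lemma jacobiTheta₂_add_mul_sub (hσ : 0 < σ.im) (x y : ℂ) :
    jacobiTheta₂ (x + y) σ * jacobiTheta₂ (x - y) σ =
      jacobiTheta₂ (2 * x) (2 * σ) * jacobiTheta₂ (2 * y) (2 * σ) +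
        cexp (Real.pi * I * (σ + 2 * (x + y))) *
          (jacobiTheta₂ (2 * x + σ) (2 * σ) * jacobiTheta₂ (2 * y + σ) (2 * σ)) := by
  have hσ' : 0 < (2 * σ).im := by simpa using hσ
  refine (hasSum_jacobiTheta₂_term_mul hσ (x + y) (x - y)).unique (hasSum_prod_int_of_parity
    ((hasSum_jacobiTheta₂_term_mul hσ' (2 * x) (2 * y)).congr_fun fun q => ?_)
    (((hasSum_jacobiTheta₂_term_mul hσ' (2 * x + σ) (2 * y + σ)).mul_left _).congr_fun fun q => ?_))
  all_goals
    simp only [jacobiTheta₂_term, ← Complex.exp_add]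
    push_cast
    ring_nf

end ThetaAddition

section Bracket

/-- The bracket `[u]` as a theta function of `A = u / r`, with modulus `σ = -1 / τ`. -/
def thetaBracket (σ A : ℂ) : ℂ :=
  cexp (Real.pi * I * σ * (A ^ 2 - A)) * jacobiTheta₂ (σ * A + 1 / 2 - σ / 2) σ

/-- The series `∑ e^{2πiσ(n + A)²}` over the integers `n`, one of the two theta functions of modulus
`2σ` out of which products of two brackets are built. -/
def evenTheta (σ A : ℂ) : ℂ :=
  cexp (Real.pi * I * σ * (2 * A ^ 2)) * jacobiTheta₂ (2 * (σ * A)) (2 * σ)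

/-- Up to the constant `e^{πiσ/2}`, the analogue of `evenTheta` with `n` running over the
half-integers. -/
def oddTheta (σ A : ℂ) : ℂ :=
  cexp (Real.pi * I * σ * (2 * A ^ 2 + 2 * A)) * jacobiTheta₂ (2 * (σ * A) + σ) (2 * σ)

lemma oddTheta_eq_jacobiTheta₂_sub (σ A : ℂ) :
    oddTheta σ A =
      cexp (Real.pi * I * σ * (2 * A ^ 2 - 2 * A)) * jacobiTheta₂ (2 * (σ * A) - σ) (2 * σ) := by
  rw [oddTheta, show 2 * (σ * A) + σ = 2 * (σ * A) - σ + 2 * σ by ring, jacobiTheta₂_add_left',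
    ← mul_assoc, ← Complex.exp_add]
  ring_nf

lemma thetaBracket_add_mul_sub {σ : ℂ} (hσ : 0 < σ.im) (A B : ℂ) :
    thetaBracket σ (A + B) * thetaBracket σ (A - B) =
      oddTheta σ A * evenTheta σ B - evenTheta σ A * oddTheta σ B := by
  set x := σ * A + 1 / 2 - σ / 2 with hx
  have hadd : σ * (A + B) + 1 / 2 - σ / 2 = x + σ * B := by ring
  have hsub : σ * (A - B) + 1 / 2 - σ / 2 = x - σ * B := by ring
  have heven : jacobiTheta₂ (2 * x) (2 * σ) = jacobiTheta₂ (2 * (σ * A) - σ) (2 * σ) := by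
    rw [← jacobiTheta₂_add_left (2 * (σ * A) - σ), hx]
    ring_nf
  have hodd : jacobiTheta₂ (2 * x + σ) (2 * σ) = jacobiTheta₂ (2 * (σ * A)) (2 * σ) := by
    rw [← jacobiTheta₂_add_left (2 * (σ * A)), hx]
    ring_nf
  have hsign : cexp (Real.pi * I * (σ + 2 * (x + σ * B))) =
      -cexp (Real.pi * I * σ * (2 * A + 2 * B)) := by
    rw [← mul_neg_one, ← exp_pi_mul_I, ← Complex.exp_add, hx]
    ring_nf
  have hprefactor : cexp (Real.pi * I * σ * ((A + B) ^ 2 - (A + B))) *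
      cexp (Real.pi * I * σ * ((A - B) ^ 2 - (A - B))) =
      cexp (Real.pi * I * σ * (2 * A ^ 2 - 2 * A)) * cexp (Real.pi * I * σ * (2 * B ^ 2)) := by
    rw [← Complex.exp_add, ← Complex.exp_add]
    ring_nf
  have hprefactor' : cexp (Real.pi * I * σ * (2 * A ^ 2 - 2 * A)) *
      cexp (Real.pi * I * σ * (2 * B ^ 2)) * cexp (Real.pi * I * σ * (2 * A + 2 * B)) =
      cexp (Real.pi * I * σ * (2 * A ^ 2)) * cexp (Real.pi * I * σ * (2 * B ^ 2 + 2 * B)) := by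
    rw [← Complex.exp_add, ← Complex.exp_add, ← Complex.exp_add]
    ring_nf
  rw [thetaBracket, thetaBracket, hadd, hsub, mul_mul_mul_comm, jacobiTheta₂_add_mul_sub hσ, heven,
    hodd, hsign, hprefactor, oddTheta_eq_jacobiTheta₂_sub, evenTheta, evenTheta, oddTheta]
  linear_combination -(jacobiTheta₂ (2 * (σ * A)) (2 * σ) *
    jacobiTheta₂ (2 * (σ * B) + σ) (2 * σ)) * hprefactor'

variable {τ : ℂ} {r : ℝ}

lemma neg_one_div_im_pos (hτ : 0 < τ.im) : 0 < (-1 / τ).im := by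
  simpa [neg_div] using UpperHalfPlane.im_inv_neg_coe_pos ⟨τ, hτ⟩

lemma br_eq_thetaBracket (hτ : 0 < τ.im) (hr : r ≠ 0) (u : ℂ) :
    br τ r u = thetaBracket (-1 / τ) (u / r) := by
  have hr' : (r : ℂ) ≠ 0 := ofReal_ne_zero.mpr hr
  have hp : xp τ r (2 * r) = cexp (2 * Real.pi * I * (-1 / τ)) := by
    rw [xp]
    congr 1
    field_simp
  have hz : xp τ r (2 * u) = cexp (2 * Real.pi * I * (-1 / τ * (u / r))) := by
    rw [xp]
    congr 1
    field_simp
  have hprefactor : xp τ r (u ^ 2 / r - u) =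
      cexp (Real.pi * I * (-1 / τ) * ((u / r) ^ 2 - u / r)) := by
    rw [xp]
    congr 1
    field_simp
  rw [br, hp, hz, hprefactor, Theta_exp_eq_jacobiTheta₂ (neg_one_div_im_pos hτ), thetaBracket]

lemma isThreeTerm_br (hτ : 0 < τ.im) (hr : r ≠ 0) : IsThreeTerm (br τ r) :=
  .of_mul_eq_sub (fun a => oddTheta (-1 / τ) (a / r)) (fun a => evenTheta (-1 / τ) (a / r))
    fun a b => by
      simp only [br_eq_thetaBracket hτ hr, add_div, sub_div,
        thetaBracket_add_mul_sub (neg_one_div_im_pos hτ)]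

end Bracket

lemma Cnk_add_eq_binomialCoeff (τ : ℂ) (r : ℝ) (n l : ℕ) (α β γ : ℂ) :
    Cnk τ r (n + l) n α β γ = binomialCoeff (br τ r) α β γ n l := by
  rw [Cnk, Nat.add_sub_cancel_left,
    show α + γ + (n + l : ℕ) - n = α + γ + l by push_cast; ring,
    show β - γ + n - (n + l : ℕ) = β - γ - l by push_cast; ring]
  rfl

/-- Elliptic binomial theorem. -/
theorem elliptic_binomial_theorem (τ : ℂ) (r : ℝ) (hτ : 0 < τ.im) (hr : 0 < r)
    (k : ℕ) (α β γ z : ℂ)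
    (h1 : ∀ n ≤ k, brF τ r 1 n ≠ 0)
    (h2 : ∀ n ≤ k, brF τ r (β - γ + (n : ℂ) - (k : ℂ)) n ≠ 0)
    (h3 : ∀ n ≤ k, brF τ r (γ - β - (n : ℂ)) (k - n) ≠ 0)
    (h4 : brF τ r (β + γ) k ≠ 0) :
    brF τ r (α + (r : ℂ) * z) k * brF τ r (α - (r : ℂ) * z) k =
      ∑ n ∈ Finset.range (k + 1),
        Cnk τ r k n α β γ *
          (brF τ r (β + (r : ℂ) * z) n * brF τ r (β - (r : ℂ) * z) n *
            brF τ r (γ + (r : ℂ) * z) (k - n) * brF τ r (γ - (r : ℂ) * z) (k - n)) := by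
  have hβγ : brF τ r (β - γ) k ≠ 0 := by simpa using h2 k le_rfl
  have hγβ : brF τ r (γ - β) k ≠ 0 := by simpa using h3 0 k.zero_le
  have hbinomial := shiftedFactorial_mul_eq_sum_antidiagonal (isThreeTerm_br hτ hr.ne') α (r * z)
    (h1 k le_rfl) hβγ hγβ h4
  rw [Finset.Nat.sum_antidiagonal_eq_sum_range_succ_mk] at hbinomial
  refine hbinomial.trans (sum_congr rfl fun n hn => ?_)
  obtain ⟨l, rfl⟩ := Nat.exists_eq_add_of_le (mem_range_succ_iff.mp hn)
  rw [Cnk_add_eq_binomialCoeff, Nat.add_sub_cancel_left]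
  rfl

end Ell
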